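/- Let (M,E,V) be a path geometry and let ξ₀ be a nowhere vanishing smooth section of the line bundle E ⊂ TM defined on an open subset U ⊂ M. Then there exist a unique linear connection ∇ on TU and a unique decomposition TU = E ⊕ V ⊕ ι(Q) (where ι : Q → TU is a bundle map with q∘ι = id_Q) such that: (i) the subbundles E, V and ι(Q) are parallel for ∇ and ∇ξ₀ = 0; (ii) the bundle map ι∘𝓛 : E ⊗ V → ι(Q) is parallel for the connections induced by ∇; (iii) the torsion τ of ∇ satisfies τ(E,V) ⊂ ι(Q), τ(H,ι(Q)) ⊂ H, and for all sections η₁,η₂ ∈ Γ(V), setting ζᵢ := ι(𝓛(ξ₀,ηᵢ)), one has 𝓛(τ(ξ₀,ζ₁),η₂) = 2𝓛(ξ₀,τ(η₁,ζ₂)). -/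

import Mathlib

/-!
An algebraic model of the smooth calculus on a smooth manifold `M`:
`C` plays the role of the algebra `C^∞(M,ℝ)` of smooth functions and `X` plays the
role of the `C^∞(M,ℝ)`-module `𝔛(M)` of smooth vector fields, together with the Lie
bracket of vector fields and the derivative of functions along vector fields
(i.e. a Lie–Rinehart algebra over `ℝ`).  Distributions (smooth subbundles of `TM`)
are modelled as `C`-submodules of `X`, linear connections on `TM` as operators
`X → X → X` with the usual tensoriality and Leibniz properties, and one-forms as
`C`-linear maps `X →ₗ[C] C`.
-/

open scoped TensorProduct

/-- The algebra of smooth functions together with the module of smooth vector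
fields on a smooth manifold, with the Lie bracket and directional derivative. -/
structure VFCalc where
  /-- the smooth functions `C^∞(M,ℝ)` -/
  C : Type
  /-- the smooth vector fields `𝔛(M)` -/
  X : Type
  [ringC : CommRing C]
  [algC : Algebra ℝ C]
  [grpX : AddCommGroup X]
  [modX : Module C X]
  /-- the Lie bracket of vector fields -/
  lie : X → X → X
  /-- the derivative `D ψ f = ψ · f` of a function along a vector field -/
  D : X → C → C
  lie_add_left : ∀ ψ₁ ψ₂ φ, lie (ψ₁ + ψ₂) φ = lie ψ₁ φ + lie ψ₂ φ
  lie_skew : ∀ ψ φ, lie φ ψ = - lie ψ φ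
  jacobi : ∀ ψ₁ ψ₂ ψ₃, lie ψ₁ (lie ψ₂ ψ₃) = lie (lie ψ₁ ψ₂) ψ₃ + lie ψ₂ (lie ψ₁ ψ₃)
  lie_smul_right : ∀ (f : C) (ψ φ : X), lie ψ (f • φ) = f • lie ψ φ + (D ψ f) • φ
  D_add_left : ∀ ψ₁ ψ₂ f, D (ψ₁ + ψ₂) f = D ψ₁ f + D ψ₂ f
  D_smul_left : ∀ (g : C) ψ f, D (g • ψ) f = g * D ψ f
  D_add_right : ∀ ψ f₁ f₂, D ψ (f₁ + f₂) = D ψ f₁ + D ψ f₂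
  D_mul_right : ∀ ψ f₁ f₂, D ψ (f₁ * f₂) = f₁ * D ψ f₂ + f₂ * D ψ f₁
  D_algebraMap : ∀ ψ r, D ψ (algebraMap ℝ C r) = 0

attribute [instance] VFCalc.ringC VFCalc.algC VFCalc.grpX VFCalc.modX

/-- the exterior derivative of a one-form, `dα(ψ,φ) = ψ·α(φ) − φ·α(ψ) − α([ψ,φ])` -/
def VFCalc.dform (P : VFCalc) (α : P.X →ₗ[P.C] P.C) (ψ φ : P.X) : P.C :=
  P.D ψ (α φ) - P.D φ (α ψ) - α (P.lie ψ φ)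

/-- A (generalized) path geometry on a manifold `M` of dimension `2n+1`:
distributions `E, V ⊂ TM` (of rank `1` and `n`) with `E ∩ V = 0`, `V` involutive,
such that the Levi bracket induces an isomorphism `E ⊗ V ≅ Q := TM/(E ⊕ V)`. -/
structure PathGeometry extends VFCalc where
  /-- the rank one distribution `E` -/
  E : Submodule C X
  /-- the rank `n` distribution `V` -/
  V : Submodule C X
  inf_bot : E ⊓ V = ⊥
  involutive : ∀ η₁ ∈ V, ∀ η₂ ∈ V, lie η₁ η₂ ∈ V
  /-- the Levi bracket `E ⊗ V → Q = TM/(E ⊔ V)` is an isomorphism of bundles -/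
  leviIso : (↥E ⊗[C] ↥V) ≃ₗ[C] (X ⧸ (E ⊔ V))
  leviIso_apply : ∀ (ξ : ↥E) (η : ↥V),
    leviIso (ξ ⊗ₜ[C] η) = Submodule.Quotient.mk (lie (ξ : X) (η : X))

namespace PathGeometry

variable (P : PathGeometry)

/-- the corank one distribution `H = E ⊕ V` -/
def H : Submodule P.C P.X := P.E ⊔ P.V

/-- the quotient bundle `Q = TM/H` -/
abbrev Q := P.X ⧸ P.H

/-- the quotient projection `q : TM → Q` -/
def q : P.X →ₗ[P.C] P.Q := P.H.mkQ

/-- the Levi bracket `𝓛(ψ,φ) = q([ψ,φ])` -/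
def levi (ψ φ : P.X) : P.Q := P.q (P.lie ψ φ)

/-- the constant function `½` -/
noncomputable def half : P.C := algebraMap ℝ P.C (1/2)

/-- A (local) scale: a nowhere vanishing smooth section `ξ₀` of the line bundle `E`,
i.e. a trivialization of `E`, modelled as a basis of `E` as free rank one module. -/
structure IsScale (ξ₀ : P.X) : Prop where
  mem : ξ₀ ∈ P.E
  span : ∀ ξ ∈ P.E, ∃ f : P.C, ξ = f • ξ₀
  basis : ∀ f : P.C, f • ξ₀ = 0 → f = 0

end PathGeometry

/-- A linear connection on `TM`. -/
structure Conn (P : VFCalc) where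
  /-- the covariant derivative `cov ψ φ = ∇_ψ φ` -/
  cov : P.X → P.X → P.X
  add_left : ∀ ψ₁ ψ₂ φ, cov (ψ₁ + ψ₂) φ = cov ψ₁ φ + cov ψ₂ φ
  smul_left : ∀ (f : P.C) ψ φ, cov (f • ψ) φ = f • cov ψ φ
  add_right : ∀ ψ φ₁ φ₂, cov ψ (φ₁ + φ₂) = cov ψ φ₁ + cov ψ φ₂
  leibniz : ∀ (f : P.C) ψ φ, cov ψ (f • φ) = f • cov ψ φ + (P.D ψ f) • φ

namespace Conn

variable {P : VFCalc} (cn : Conn P)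

/-- the torsion `τ(ψ₁,ψ₂) = ∇_{ψ₁}ψ₂ − ∇_{ψ₂}ψ₁ − [ψ₁,ψ₂]` -/
def torsion (ψ₁ ψ₂ : P.X) : P.X := cn.cov ψ₁ ψ₂ - cn.cov ψ₂ ψ₁ - P.lie ψ₁ ψ₂

/-- the curvature `R(ψ₁,ψ₂)(ψ₃) = ∇_{ψ₁}∇_{ψ₂}ψ₃ − ∇_{ψ₂}∇_{ψ₁}ψ₃ − ∇_{[ψ₁,ψ₂]}ψ₃` -/
def curv (ψ₁ ψ₂ ψ₃ : P.X) : P.X :=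
  cn.cov ψ₁ (cn.cov ψ₂ ψ₃) - cn.cov ψ₂ (cn.cov ψ₁ ψ₃) - cn.cov (P.lie ψ₁ ψ₂) ψ₃

end Conn

/-- The Weyl structure associated to a scale `ξ₀`: a linear connection `∇` on `TM`
together with a decomposition `TM = E ⊕ V ⊕ ι(Q)` (encoded by the splitting
`ι : Q → TM` of `q`) such that `E`, `V`, `ι(Q)` are parallel, `∇ξ₀ = 0`,
`ι ∘ 𝓛 : E ⊗ V → ι(Q)` is parallel, the torsion satisfies `τ(E,V) ⊂ ι(Q)`,
`τ(H,ι(Q)) ⊂ H` and the normalization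
`𝓛(τ(ξ₀,ζ₁),η₂) = 2𝓛(ξ₀,τ(η₁,ζ₂))` for `ζᵢ = ι(𝓛(ξ₀,ηᵢ))`. -/
structure WeylStructure (P : PathGeometry) (ξ₀ : P.X) where
  conn : Conn P.toVFCalc
  ι : P.Q →ₗ[P.C] P.X
  q_ι : ∀ w, P.q (ι w) = w
  parE : ∀ ψ : P.X, ∀ ξ ∈ P.E, conn.cov ψ ξ ∈ P.E
  parV : ∀ ψ : P.X, ∀ η ∈ P.V, conn.cov ψ η ∈ P.V
  parQ : ∀ (ψ : P.X) (w : P.Q), conn.cov ψ (ι w) ∈ LinearMap.range ι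
  parScale : ∀ ψ : P.X, conn.cov ψ ξ₀ = 0
  parLevi : ∀ ψ : P.X, ∀ ξ ∈ P.E, ∀ η ∈ P.V,
    conn.cov ψ (ι (P.levi ξ η)) = ι (P.levi (conn.cov ψ ξ) η) + ι (P.levi ξ (conn.cov ψ η))
  torsEV : ∀ ξ ∈ P.E, ∀ η ∈ P.V, conn.torsion ξ η ∈ LinearMap.range ι
  torsHQ : ∀ ψ ∈ P.H, ∀ w : P.Q, conn.torsion ψ (ι w) ∈ P.H
  norm : ∀ η₁ ∈ P.V, ∀ η₂ ∈ P.V,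
    P.levi (conn.torsion ξ₀ (ι (P.levi ξ₀ η₁))) η₂
      = (2 : P.C) • P.levi ξ₀ (conn.torsion η₁ (ι (P.levi ξ₀ η₂)))

/-!
Write `L η = 𝓛(ξ₀, η)`. As `ξ₀` trivializes `E` and `𝓛` is an isomorphism, `L : V → Q` is a
`C`-linear isomorphism. Put `ζ = ι ∘ L`; parallelism of `ι ∘ 𝓛` and of `ξ₀` says
`∇_ψ (ζ η) = ζ (∇_ψ η)`, so everything is determined by `ι` and by `∇` on `V`. The conditions on
the torsion then determine these pieces one after another:

* `τ(ξ₀, η) ∈ ι(Q)` means `[ξ₀, η] = ∇_{ξ₀} η + ζ η`;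
* `τ(ξ₀, ζ η) ∈ H` then gives `2 L(∇_{ξ₀} η) = q [ξ₀, [ξ₀, η]]`, which fixes `∇_{ξ₀}` on `V`, and
  hence `ι`;
* `τ(η₁, ζ η₂) ∈ H` gives `L(∇_{η₁} η₂) = q [η₁, ζ η₂]`;
* the normalization gives
  `∇_{ζ η₂} η₁ = ½ [ξ₀, ζ η₁]_E η₂ - [η₁, ζ η₂]_V`, where the subscripts denote components
  with respect to `TM = E ⊕ V ⊕ ι(Q)`.

Conversely, each right-hand side is tensorial in the direction and satisfies the Leibniz rule, so
these formulas define a Weyl structure. No local frames are needed, so `V` may be any module.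
-/

namespace PathGeometry

/-! ### Lie bracket and Levi bracket -/

section Basic

variable {P : PathGeometry}

lemma lie_add_right (ψ φ₁ φ₂ : P.X) : P.lie ψ (φ₁ + φ₂) = P.lie ψ φ₁ + P.lie ψ φ₂ := by
  rw [P.lie_skew (φ₁ + φ₂) ψ, P.lie_add_left, P.lie_skew φ₁ ψ, P.lie_skew φ₂ ψ]; abel

lemma lie_smul_left (f : P.C) (ψ φ : P.X) :
    P.lie (f • ψ) φ = f • P.lie ψ φ - (P.D φ f) • ψ := by
  rw [P.lie_skew φ (f • ψ), P.lie_smul_right, P.lie_skew φ ψ, smul_neg]; abel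

lemma lie_neg_right (ψ φ : P.X) : P.lie ψ (-φ) = -P.lie ψ φ := by
  have h := lie_add_right ψ φ (-φ)
  have h0 := lie_add_right ψ (0 : P.X) 0
  rw [add_zero] at h0
  rw [add_neg_cancel, left_eq_add.mp h0] at h
  exact (neg_eq_of_add_eq_zero_right h.symm).symm

lemma lie_sub_right (ψ φ₁ φ₂ : P.X) : P.lie ψ (φ₁ - φ₂) = P.lie ψ φ₁ - P.lie ψ φ₂ := by
  rw [sub_eq_add_neg, lie_add_right, lie_neg_right, ← sub_eq_add_neg]

lemma lie_neg_left (ψ φ : P.X) : P.lie (-ψ) φ = -P.lie ψ φ := by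
  rw [P.lie_skew φ (-ψ), lie_neg_right, P.lie_skew φ ψ]

variable (P) in
lemma half_add_half : P.half + P.half = 1 := by
  rw [half, ← map_add]; norm_num

lemma half_smul_add {M : Type*} [AddCommGroup M] [Module P.C M] (x : M) :
    P.half • x + P.half • x = x := by
  rw [← add_smul, half_add_half, one_smul]

lemma eq_of_add_self_eq {M : Type*} [AddCommGroup M] [Module P.C M] {x y : M}
    (h : x + x = y + y) : x = y := by
  rw [← half_smul_add (P := P) x, ← half_smul_add (P := P) y, ← smul_add, ← smul_add, h]

lemma lie_self (ψ : P.X) : P.lie ψ ψ = 0 := by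
  apply eq_of_add_self_eq (P := P)
  nth_rewrite 1 [P.lie_skew ψ ψ]
  simp

lemma q_eq_zero {φ : P.X} : P.q φ = 0 ↔ φ ∈ P.H := by
  simp [q]

lemma mem_H_E {φ : P.X} (h : φ ∈ P.E) : φ ∈ P.H :=
  show φ ∈ P.E ⊔ P.V from Submodule.mem_sup_left h

lemma mem_H_V {φ : P.X} (h : φ ∈ P.V) : φ ∈ P.H :=
  show φ ∈ P.E ⊔ P.V from Submodule.mem_sup_right h

lemma q_E {φ : P.X} (h : φ ∈ P.E) : P.q φ = 0 :=
  q_eq_zero.2 (mem_H_E h)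

lemma q_V {φ : P.X} (h : φ ∈ P.V) : P.q φ = 0 :=
  q_eq_zero.2 (mem_H_V h)

lemma levi_add_left (φ₁ φ₂ ψ : P.X) : P.levi (φ₁ + φ₂) ψ = P.levi φ₁ ψ + P.levi φ₂ ψ := by
  simp [levi, P.lie_add_left]

lemma levi_add_right (ψ φ₁ φ₂ : P.X) : P.levi ψ (φ₁ + φ₂) = P.levi ψ φ₁ + P.levi ψ φ₂ := by
  simp [levi, lie_add_right]

lemma levi_V_V {η₁ η₂ : P.X} (h₁ : η₁ ∈ P.V) (h₂ : η₂ ∈ P.V) : P.levi η₁ η₂ = 0 :=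
  q_V (P.involutive _ h₁ _ h₂)

end Basic

/-! ### The splitting and the connection on `V` determined by a scale -/

section Scale

variable {P : PathGeometry} {ξ₀ : P.X} (hξ₀ : P.IsScale ξ₀)
include hξ₀

/-- Trivialization `C ≃ E`, `f ↦ f ξ₀`. -/
noncomputable def scaleEquiv : P.C ≃ₗ[P.C] ↥P.E :=
  LinearEquiv.ofBijective (LinearMap.toSpanSingleton P.C ↥P.E ⟨ξ₀, hξ₀.mem⟩) <| by
    constructor
    · rw [injective_iff_map_eq_zero]
      intro f hf
      exact hξ₀.basis f (congrArg Subtype.val hf)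
    · rintro ⟨ξ, hξ⟩
      obtain ⟨f, rfl⟩ := hξ₀.span ξ hξ
      exact ⟨f, rfl⟩

/-- The isomorphism `L = 𝓛(ξ₀, ·) : V ≃ Q`. -/
noncomputable def L : ↥P.V ≃ₗ[P.C] P.Q :=
  (TensorProduct.lid P.C ↥P.V).symm ≪≫ₗ
    (TensorProduct.congr (scaleEquiv hξ₀) (LinearEquiv.refl P.C ↥P.V)) ≪≫ₗ P.leviIso

lemma L_apply (η : ↥P.V) : L hξ₀ η = P.levi ξ₀ η := by
  have h : L hξ₀ η = P.leviIso ((⟨ξ₀, hξ₀.mem⟩ : ↥P.E) ⊗ₜ[P.C] η) := by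
    change P.leviIso (TensorProduct.congr (scaleEquiv hξ₀) (LinearEquiv.refl P.C ↥P.V)
      ((TensorProduct.lid P.C ↥P.V).symm η)) = _
    have h1 : scaleEquiv hξ₀ 1 = ⟨ξ₀, hξ₀.mem⟩ := Subtype.ext (one_smul P.C ξ₀)
    rw [TensorProduct.lid_symm_apply, TensorProduct.congr_tmul, h1, LinearEquiv.refl_apply]
  rw [h]
  exact P.leviIso_apply _ _

lemma levi_smul_scale (f : P.C) (η : P.X) :
    P.levi (f • ξ₀) η = f • P.levi ξ₀ η := by
  simp [levi, lie_smul_left, q_E hξ₀.mem]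

lemma levi_scale_E {ξ : P.X} (hξ : ξ ∈ P.E) : P.levi ξ₀ ξ = 0 := by
  obtain ⟨f, rfl⟩ := hξ₀.span ξ hξ
  simp [levi, P.lie_smul_right, lie_self, q_E hξ₀.mem]

/-- The operator `∇_{ξ₀}` on `V`: `A η = ½ L⁻¹ q [ξ₀, [ξ₀, η]]`. -/
noncomputable def A (η : ↥P.V) : ↥P.V :=
  P.half • (L hξ₀).symm (P.q (P.lie ξ₀ (P.lie ξ₀ η)))

lemma L_A_add (η : ↥P.V) :
    L hξ₀ (A hξ₀ η) + L hξ₀ (A hξ₀ η) = P.q (P.lie ξ₀ (P.lie ξ₀ η)) := by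
  simp only [A, map_smul, LinearEquiv.apply_symm_apply]
  exact half_smul_add _

lemma A_add (η₁ η₂ : ↥P.V) : A hξ₀ (η₁ + η₂) = A hξ₀ η₁ + A hξ₀ η₂ := by
  simp [A, lie_add_right]

lemma A_smul (f : P.C) (η : ↥P.V) :
    A hξ₀ (f • η) = f • A hξ₀ η + P.D ξ₀ f • η := by
  apply (L hξ₀).injective
  apply eq_of_add_self_eq (P := P)
  rw [L_A_add]
  have h := L_A_add hξ₀ η
  have h1 : P.q (P.lie ξ₀ η) = L hξ₀ η := (L_apply hξ₀ η).symm
  simp only [Submodule.coe_smul, P.lie_smul_right, lie_add_right, map_add, map_smul, ← h, h1,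
    q_V η.2]
  module

/-- The lift `ζ = ι ∘ L : V → TM`, given by `ζ η = [ξ₀, η] - A η`. -/
noncomputable def zeta : ↥P.V →ₗ[P.C] P.X where
  toFun η := P.lie ξ₀ η - A hξ₀ η
  map_add' η₁ η₂ := by
    simp only [Submodule.coe_add, lie_add_right, A_add]; abel
  map_smul' f η := by
    simp only [Submodule.coe_smul, Submodule.coe_add, P.lie_smul_right, A_smul, RingHom.id_apply]
    module

lemma zeta_apply (η : ↥P.V) : zeta hξ₀ η = P.lie ξ₀ η - A hξ₀ η := rfl

lemma q_zeta (η : ↥P.V) : P.q (zeta hξ₀ η) = L hξ₀ η := by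
  rw [zeta_apply, map_sub, q_V (A hξ₀ η).2, sub_zero, L_apply]; rfl

/-- The decomposition `TM = E ⊕ V ⊕ ι(Q)` as a linear isomorphism
`(f, η, η') ↦ f ξ₀ + η + ζ η'`. -/
noncomputable def dec : (P.C × ↥P.V × ↥P.V) ≃ₗ[P.C] P.X :=
  LinearEquiv.ofBijective
    ((LinearMap.toSpanSingleton P.C P.X ξ₀).coprod (P.V.subtype.coprod (zeta hξ₀))) <| by
    constructor
    · rw [injective_iff_map_eq_zero]
      rintro ⟨f, η, η'⟩ h
      simp only [LinearMap.coprod_apply, LinearMap.toSpanSingleton_apply,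
        Submodule.subtype_apply] at h
      have hq := congrArg P.q h
      simp only [map_add, map_smul, q_E hξ₀.mem, q_V η.2, q_zeta, smul_zero, zero_add, map_zero,
        LinearEquiv.map_eq_zero_iff] at hq
      subst hq
      rw [map_zero, add_zero] at h
      have hE : (η : P.X) ∈ P.E := by
        rw [eq_neg_of_add_eq_zero_right h]
        exact neg_mem (P.E.smul_mem f hξ₀.mem)
      have h0 : (η : P.X) = 0 := by
        have : (η : P.X) ∈ P.E ⊓ P.V := ⟨hE, η.2⟩
        rwa [P.inf_bot, Submodule.mem_bot] at this
      rw [h0, add_zero] at h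
      rw [hξ₀.basis f h, show η = 0 from Subtype.ext h0]; rfl
    · intro φ
      have h : φ - zeta hξ₀ ((L hξ₀).symm (P.q φ)) ∈ P.E ⊔ P.V := by
        change _ ∈ P.H
        rw [← q_eq_zero, map_sub, q_zeta, LinearEquiv.apply_symm_apply, sub_self]
      obtain ⟨ξ, hξ, η, hη, h⟩ := Submodule.mem_sup.1 h
      obtain ⟨f, rfl⟩ := hξ₀.span ξ hξ
      refine ⟨(f, ⟨η, hη⟩, (L hξ₀).symm (P.q φ)), ?_⟩
      simp only [LinearMap.coprod_apply, LinearMap.toSpanSingleton_apply,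
        Submodule.subtype_apply]
      rw [← add_assoc, h, sub_add_cancel]

lemma dec_apply (f : P.C) (η η' : ↥P.V) :
    dec hξ₀ (f, η, η') = f • ξ₀ + (η + zeta hξ₀ η') := rfl

/-- The coefficient of `ξ₀` in the decomposition `TM = E ⊕ V ⊕ ι(Q)`. -/
noncomputable def cE : P.X →ₗ[P.C] P.C :=
  LinearMap.fst _ _ _ ∘ₗ (dec hξ₀).symm.toLinearMap

/-- The `V`-component in the decomposition `TM = E ⊕ V ⊕ ι(Q)`. -/
noncomputable def cV : P.X →ₗ[P.C] ↥P.V :=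
  LinearMap.fst _ _ _ ∘ₗ LinearMap.snd _ _ _ ∘ₗ (dec hξ₀).symm.toLinearMap

/-- The `ι(Q)`-component in the decomposition `TM = E ⊕ V ⊕ ι(Q)`, transported to `V` by `ζ`. -/
noncomputable def cQ : P.X →ₗ[P.C] ↥P.V :=
  LinearMap.snd _ _ _ ∘ₗ LinearMap.snd _ _ _ ∘ₗ (dec hξ₀).symm.toLinearMap

lemma decomp (φ : P.X) : cE hξ₀ φ • ξ₀ + (cV hξ₀ φ + zeta hξ₀ (cQ hξ₀ φ)) = φ := by
  rw [← dec_apply]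
  exact (dec hξ₀).apply_symm_apply φ

lemma symm_scale : (dec hξ₀).symm ξ₀ = (1, 0, 0) := by
  rw [LinearEquiv.symm_apply_eq, dec_apply]; simp

lemma symm_V (η : ↥P.V) : (dec hξ₀).symm η = (0, η, 0) := by
  rw [LinearEquiv.symm_apply_eq, dec_apply]; simp

lemma symm_zeta (η : ↥P.V) : (dec hξ₀).symm (zeta hξ₀ η) = (0, 0, η) := by
  rw [LinearEquiv.symm_apply_eq, dec_apply]; simp

lemma cE_scale : cE hξ₀ ξ₀ = 1 := by simp [cE, symm_scale]
lemma cV_scale : cV hξ₀ ξ₀ = 0 := by simp [cV, symm_scale]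
lemma cQ_scale : cQ hξ₀ ξ₀ = 0 := by simp [cQ, symm_scale]
lemma cE_V (η : ↥P.V) : cE hξ₀ (η : P.X) = 0 := by simp [cE, symm_V]
lemma cV_V (η : ↥P.V) : cV hξ₀ (η : P.X) = η := by simp [cV, symm_V]
lemma cQ_V (η : ↥P.V) : cQ hξ₀ (η : P.X) = 0 := by simp [cQ, symm_V]
lemma cE_zeta (η : ↥P.V) : cE hξ₀ (zeta hξ₀ η) = 0 := by simp [cE, symm_zeta]
lemma cV_zeta (η : ↥P.V) : cV hξ₀ (zeta hξ₀ η) = 0 := by simp [cV, symm_zeta]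
lemma cQ_zeta (η : ↥P.V) : cQ hξ₀ (zeta hξ₀ η) = η := by simp [cQ, symm_zeta]

lemma L_cQ (φ : P.X) : L hξ₀ (cQ hξ₀ φ) = P.q φ := by
  conv_rhs => rw [← decomp hξ₀ φ]
  simp only [map_add, map_smul, q_E hξ₀.mem, q_V (cV hξ₀ φ).2, q_zeta, smul_zero, zero_add]

/-- The connection on `V` in directions of `V`: `B η₁ η₂ = L⁻¹ q [η₁, ζ η₂]`.
The `ι(Q)`-component `cQ` coincides with `L⁻¹ ∘ q`, see `L_cQ`. -/
noncomputable def B (η₁ η₂ : ↥P.V) : ↥P.V := cQ hξ₀ (P.lie η₁ (zeta hξ₀ η₂))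

/-- The connection on `V` in directions of `ι(Q)`:
`G η' η = ∇_{ζ η'} η = ½ [ξ₀, ζ η]_E η' - [η, ζ η']_V`. -/
noncomputable def G (η' η : ↥P.V) : ↥P.V :=
  P.half • (cE hξ₀ (P.lie ξ₀ (zeta hξ₀ η)) • η') - cV hξ₀ (P.lie η (zeta hξ₀ η'))

/-- The connection `∇_ψ η` on `V`, assembled from the components of the direction `ψ`. -/
noncomputable def N (ψ : P.X) (η : ↥P.V) : ↥P.V :=
  cE hξ₀ ψ • A hξ₀ η + B hξ₀ (cV hξ₀ ψ) η + G hξ₀ (cQ hξ₀ ψ) η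

lemma D_decomp (ψ : P.X) (f : P.C) :
    P.D ψ f = cE hξ₀ ψ * P.D ξ₀ f + P.D (cV hξ₀ ψ) f + P.D (zeta hξ₀ (cQ hξ₀ ψ)) f := by
  conv_lhs => rw [← decomp hξ₀ ψ]
  rw [P.D_add_left, P.D_add_left, P.D_smul_left, add_assoc]

lemma N_add_left (ψ₁ ψ₂ : P.X) (η : ↥P.V) :
    N hξ₀ (ψ₁ + ψ₂) η = N hξ₀ ψ₁ η + N hξ₀ ψ₂ η := by
  simp only [N, B, G, map_add, Submodule.coe_add, P.lie_add_left, lie_add_right]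
  module

lemma N_smul_left (f : P.C) (ψ : P.X) (η : ↥P.V) :
    N hξ₀ (f • ψ) η = f • N hξ₀ ψ η := by
  simp only [N, B, G, map_smul, map_add, map_sub, Submodule.coe_smul, lie_smul_left,
    P.lie_smul_right, cQ_V, cV_zeta, smul_eq_mul]
  module

lemma N_add_right (ψ : P.X) (η₁ η₂ : ↥P.V) :
    N hξ₀ ψ (η₁ + η₂) = N hξ₀ ψ η₁ + N hξ₀ ψ η₂ := by
  simp only [N, B, G, map_add, Submodule.coe_add, P.lie_add_left, lie_add_right, A_add]
  module

lemma N_leibniz (f : P.C) (ψ : P.X) (η : ↥P.V) :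
    N hξ₀ ψ (f • η) = f • N hξ₀ ψ η + P.D ψ f • η := by
  rw [D_decomp hξ₀ ψ f]
  simp only [N, B, G, map_smul, map_add, map_sub, Submodule.coe_smul, lie_smul_left,
    P.lie_smul_right, cQ_zeta, cV_V, cE_zeta, smul_eq_mul, A_smul]
  module

/-! ### Existence -/

/-- The connection on `TM` preserving the decomposition, with `∇ξ₀ = 0`, given by `N` on `V`
and by its transport along `ζ` on `ι(Q)`. -/
noncomputable def weylConn : Conn P.toVFCalc where
  cov ψ φ := P.D ψ (cE hξ₀ φ) • ξ₀ + (N hξ₀ ψ (cV hξ₀ φ) + zeta hξ₀ (N hξ₀ ψ (cQ hξ₀ φ)))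
  add_left ψ₁ ψ₂ φ := by
    simp only [P.D_add_left, N_add_left, map_add, Submodule.coe_add]
    module
  smul_left f ψ φ := by
    simp only [P.D_smul_left, N_smul_left, map_smul, Submodule.coe_smul]
    module
  add_right ψ φ₁ φ₂ := by
    simp only [P.D_add_right, N_add_right, map_add, Submodule.coe_add]
    module
  leibniz f ψ φ := by
    conv_rhs => rw [← decomp hξ₀ φ]
    simp only [map_add, map_smul, smul_eq_mul, P.D_mul_right, N_leibniz, Submodule.coe_add,
      Submodule.coe_smul, cE_scale, cV_scale, cQ_scale, cE_V, cV_V, cQ_V, cE_zeta, cV_zeta,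
      cQ_zeta, mul_one, add_zero, zero_add, smul_zero]
    module

omit hξ₀ in
lemma D_zero (ψ : P.X) : P.D ψ 0 = 0 := by
  simpa using P.D_algebraMap ψ 0

omit hξ₀ in
lemma D_one (ψ : P.X) : P.D ψ 1 = 0 := by
  simpa using P.D_algebraMap ψ 1

lemma N_zero (ψ : P.X) : N hξ₀ ψ 0 = 0 := by
  simpa using N_add_right hξ₀ ψ 0 0

lemma cov_scale (ψ : P.X) : (weylConn hξ₀).cov ψ ξ₀ = 0 := by
  simp [weylConn, cE_scale, cV_scale, cQ_scale, N_zero, D_one]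

lemma cov_V (ψ : P.X) (η : ↥P.V) : (weylConn hξ₀).cov ψ η = N hξ₀ ψ η := by
  simp [weylConn, cE_V, cV_V, cQ_V, N_zero, D_zero]

lemma cov_zeta (ψ : P.X) (η : ↥P.V) :
    (weylConn hξ₀).cov ψ (zeta hξ₀ η) = zeta hξ₀ (N hξ₀ ψ η) := by
  simp [weylConn, cE_zeta, cV_zeta, cQ_zeta, N_zero, D_zero]

lemma B_zero (η : ↥P.V) : B hξ₀ 0 η = 0 := by
  have h' := P.lie_add_left 0 0 (zeta hξ₀ η)
  rw [add_zero] at h'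
  simp only [B, Submodule.coe_zero, left_eq_add.mp h', map_zero]

lemma G_zero (η : ↥P.V) : G hξ₀ 0 η = 0 := by
  have h' := lie_add_right (P := P) η 0 0
  rw [add_zero] at h'
  simp [G, left_eq_add.mp h']

lemma N_scale (η : ↥P.V) : N hξ₀ ξ₀ η = A hξ₀ η := by
  simp [N, cE_scale, cV_scale, cQ_scale, B_zero, G_zero]

lemma N_V (η₁ η : ↥P.V) : N hξ₀ η₁ η = B hξ₀ η₁ η := by
  simp [N, cE_V, cV_V, cQ_V, G_zero]

lemma N_zeta (η' η : ↥P.V) : N hξ₀ (zeta hξ₀ η') η = G hξ₀ η' η := by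
  simp [N, cE_zeta, cV_zeta, cQ_zeta, B_zero]

/-- This forces `τ(ξ₀, ζ η) = ζ (A η) - [ξ₀, ζ η]` to lie in `H`. -/
lemma cQ_lie_scale_zeta (η : ↥P.V) : cQ hξ₀ (P.lie ξ₀ (zeta hξ₀ η)) = A hξ₀ η := by
  apply (L hξ₀).injective
  rw [L_cQ, zeta_apply, lie_sub_right, map_sub, ← L_A_add hξ₀, L_apply hξ₀ (A hξ₀ η)]
  exact add_sub_cancel_right _ _

lemma torsion_scale_V (η : ↥P.V) : (weylConn hξ₀).torsion ξ₀ η = -zeta hξ₀ η := by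
  rw [Conn.torsion, cov_V, cov_scale, N_scale, zeta_apply]; abel

lemma torsion_scale_zeta (η : ↥P.V) : (weylConn hξ₀).torsion ξ₀ (zeta hξ₀ η) =
    -(cE hξ₀ (P.lie ξ₀ (zeta hξ₀ η)) • ξ₀) + -(cV hξ₀ (P.lie ξ₀ (zeta hξ₀ η)) : P.X) := by
  rw [Conn.torsion, cov_zeta, cov_scale, N_scale]
  nth_rewrite 1 [← decomp hξ₀ (P.lie ξ₀ (zeta hξ₀ η))]
  rw [cQ_lie_scale_zeta]; abel

lemma torsion_V_zeta (η₁ η₂ : ↥P.V) : (weylConn hξ₀).torsion η₁ (zeta hξ₀ η₂) =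
    -(cE hξ₀ (P.lie η₁ (zeta hξ₀ η₂)) • ξ₀) +
      -((P.half * cE hξ₀ (P.lie ξ₀ (zeta hξ₀ η₁))) • η₂ : P.X) := by
  rw [Conn.torsion, cov_zeta, cov_V, N_V, N_zeta]
  nth_rewrite 1 [← decomp hξ₀ (P.lie η₁ (zeta hξ₀ η₂))]
  rw [B, G, Submodule.coe_sub, smul_smul, Submodule.coe_smul]; abel

omit hξ₀ in
lemma torsion_add_left (cn : Conn P.toVFCalc) (ψ₁ ψ₂ φ : P.X) :
    cn.torsion (ψ₁ + ψ₂) φ = cn.torsion ψ₁ φ + cn.torsion ψ₂ φ := by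
  simp only [Conn.torsion, cn.add_left, cn.add_right, P.lie_add_left]; abel

omit hξ₀ in
lemma torsion_smul_left (cn : Conn P.toVFCalc) (f : P.C) (ψ φ : P.X) :
    cn.torsion (f • ψ) φ = f • cn.torsion ψ φ := by
  simp only [Conn.torsion, cn.smul_left, cn.leibniz, lie_smul_left]; module

/-- The Weyl structure of a scale. -/
noncomputable def weylStructure : WeylStructure P ξ₀ where
  conn := weylConn hξ₀
  ι := zeta hξ₀ ∘ₗ (L hξ₀).symm.toLinearMap
  q_ι w := by simp [q_zeta]
  parE ψ ξ hξ := by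
    obtain ⟨f, rfl⟩ := hξ₀.span ξ hξ
    rw [(weylConn hξ₀).leibniz, cov_scale, smul_zero, zero_add]
    exact P.E.smul_mem _ hξ₀.mem
  parV ψ η hη := by
    rw [cov_V hξ₀ ψ ⟨η, hη⟩]; exact Subtype.prop _
  parQ ψ w := ⟨L hξ₀ (N hξ₀ ψ ((L hξ₀).symm w)), by simp [cov_zeta]⟩
  parScale := cov_scale hξ₀
  parLevi ψ ξ hξ η hη := by
    obtain ⟨f, rfl⟩ := hξ₀.span ξ hξ
    have hN := cov_V hξ₀ ψ ⟨η, hη⟩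
    have h1 := L_apply hξ₀ ⟨η, hη⟩
    have h2 := L_apply hξ₀ (N hξ₀ ψ ⟨η, hη⟩)
    simp only at hN h1
    rw [hN, (weylConn hξ₀).leibniz, cov_scale, smul_zero, zero_add,
      levi_smul_scale hξ₀, levi_smul_scale hξ₀,
      levi_smul_scale hξ₀, ← h1, ← h2]
    simp only [map_smul, LinearMap.comp_apply, LinearEquiv.coe_coe,
      LinearEquiv.symm_apply_apply, (weylConn hξ₀).leibniz, cov_zeta]
    abel
  torsEV ξ hξ η hη := by
    obtain ⟨f, rfl⟩ := hξ₀.span ξ hξ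
    have h := torsion_scale_V hξ₀ ⟨η, hη⟩
    simp only at h
    rw [torsion_smul_left, h]
    exact ⟨-(f • L hξ₀ ⟨η, hη⟩), by
      simp only [map_neg, LinearMap.map_smul, LinearMap.comp_apply, LinearEquiv.coe_coe,
        LinearEquiv.symm_apply_apply, smul_neg]⟩
  torsHQ ψ hψ w := by
    obtain ⟨ξ, hξ, η, hη, rfl⟩ := Submodule.mem_sup.1 (show ψ ∈ P.E ⊔ P.V from hψ)
    obtain ⟨f, rfl⟩ := hξ₀.span ξ hξ
    have hE : ξ₀ ∈ P.H := mem_H_E hξ₀.mem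
    have hV (v : ↥P.V) : (v : P.X) ∈ P.H := mem_H_V v.2
    have h := torsion_V_zeta hξ₀ ⟨η, hη⟩ ((L hξ₀).symm w)
    simp only at h
    simp only [LinearMap.comp_apply, LinearEquiv.coe_coe]
    rw [torsion_add_left, torsion_smul_left, torsion_scale_zeta, h]
    exact add_mem
      (P.H.smul_mem _ (add_mem (neg_mem (P.H.smul_mem _ hE)) (neg_mem (hV _))))
      (add_mem (neg_mem (P.H.smul_mem _ hE)) (neg_mem (P.H.smul_mem _ (hV _))))
  norm η₁ h₁ η₂ h₂ := by
    have e₁ := L_apply hξ₀ ⟨η₁, h₁⟩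
    have e₂ := L_apply hξ₀ ⟨η₂, h₂⟩
    have t := torsion_V_zeta hξ₀ ⟨η₁, h₁⟩ ⟨η₂, h₂⟩
    simp only at e₁ e₂ t
    rw [← e₁, ← e₂]
    simp only [LinearMap.comp_apply, LinearEquiv.coe_coe, LinearEquiv.symm_apply_apply]
    rw [t, torsion_scale_zeta, levi_add_left, levi_add_right,
      levi_V_V (neg_mem (Subtype.prop _)) h₂,
      levi_scale_E hξ₀ (neg_mem (P.E.smul_mem _ hξ₀.mem)), add_zero, zero_add,
      ← neg_smul, levi_smul_scale hξ₀, ← neg_smul]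
    have hl (f : P.C) : P.levi ξ₀ (f • η₂) = f • P.levi ξ₀ η₂ := by
      simp [levi, P.lie_smul_right, q_V h₂]
    rw [hl, smul_smul]
    congr 1
    linear_combination (cE hξ₀ (P.lie ξ₀ (zeta hξ₀ ⟨η₁, h₁⟩))) * P.half_add_half

end Scale

/-! ### Uniqueness -/

section Uniqueness

variable {P : PathGeometry} {ξ₀ : P.X} (hξ₀ : P.IsScale ξ₀) (W : WeylStructure P ξ₀)
include hξ₀

lemma levi_scale_injective {η₁ η₂ : P.X} (h₁ : η₁ ∈ P.V) (h₂ : η₂ ∈ P.V)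
    (h : P.levi ξ₀ η₁ = P.levi ξ₀ η₂) : η₁ = η₂ :=
  congrArg Subtype.val ((L hξ₀).injective (a₁ := ⟨η₁, h₁⟩) (a₂ := ⟨η₂, h₂⟩)
    (by rw [L_apply, L_apply]; exact h))

omit hξ₀ in
lemma levi_zero_left (η : P.X) : P.levi 0 η = 0 := by
  simpa using levi_add_left (0 : P.X) 0 η

lemma weyl_cov_iota (ψ : P.X) {η : P.X} (hη : η ∈ P.V) :
    W.conn.cov ψ (W.ι (P.levi ξ₀ η)) = W.ι (P.levi ξ₀ (W.conn.cov ψ η)) := by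
  rw [W.parLevi ψ ξ₀ hξ₀.mem η hη, W.parScale, levi_zero_left, map_zero, zero_add]

/-- `τ(E, V) ⊂ ι(Q)` expresses `ι ∘ L` through `∇_{ξ₀}`. -/
lemma weyl_iota {η : P.X} (hη : η ∈ P.V) :
    W.ι (P.levi ξ₀ η) = P.lie ξ₀ η - W.conn.cov ξ₀ η := by
  obtain ⟨w, hw⟩ := W.torsEV ξ₀ hξ₀.mem η hη
  rw [Conn.torsion, W.parScale, sub_zero] at hw
  have hq := congrArg P.q hw
  rw [W.q_ι, map_sub, q_V (W.parV ξ₀ η hη), zero_sub] at hq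
  have hq' : w = -P.levi ξ₀ η := hq
  rw [hq', map_neg] at hw
  rw [← neg_sub, ← hw, neg_neg]

lemma weyl_scale {η : P.X} (hη : η ∈ P.V) :
    P.levi ξ₀ (W.conn.cov ξ₀ η) + P.levi ξ₀ (W.conn.cov ξ₀ η) =
      P.q (P.lie ξ₀ (P.lie ξ₀ η)) := by
  have h := q_eq_zero.2 (W.torsHQ ξ₀ (mem_H_E hξ₀.mem) (P.levi ξ₀ η))
  rw [Conn.torsion, W.parScale, sub_zero, weyl_cov_iota hξ₀ W _ hη, map_sub, W.q_ι,
    weyl_iota hξ₀ W hη, lie_sub_right, map_sub] at h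
  have h' : P.levi ξ₀ (W.conn.cov ξ₀ η) -
    (P.q (P.lie ξ₀ (P.lie ξ₀ η)) - P.levi ξ₀ (W.conn.cov ξ₀ η)) = 0 := h
  rw [← sub_eq_zero, ← h']; abel

lemma weyl_V {η₁ η₂ : P.X} (h₁ : η₁ ∈ P.V) (h₂ : η₂ ∈ P.V) :
    P.levi ξ₀ (W.conn.cov η₁ η₂) = P.q (P.lie η₁ (W.ι (P.levi ξ₀ η₂))) := by
  have h := q_eq_zero.2 (W.torsHQ η₁ (mem_H_V h₁) (P.levi ξ₀ η₂))
  rw [Conn.torsion, weyl_cov_iota hξ₀ W _ h₂, map_sub, map_sub, W.q_ι,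
    q_V (W.parV _ _ h₁), sub_zero, sub_eq_zero] at h
  exact h

lemma weyl_unique (W₁ W₂ : WeylStructure P ξ₀) : W₁.conn.cov = W₂.conn.cov ∧ W₁.ι = W₂.ι := by
  have hA {η : P.X} (hη : η ∈ P.V) : W₁.conn.cov ξ₀ η = W₂.conn.cov ξ₀ η :=
    levi_scale_injective hξ₀ (W₁.parV _ _ hη) (W₂.parV _ _ hη) <|
      eq_of_add_self_eq (P := P) <| by rw [weyl_scale hξ₀ W₁ hη, weyl_scale hξ₀ W₂ hη]
  have hL (w : P.Q) : ∃ η ∈ P.V, P.levi ξ₀ η = w :=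
    ⟨(L hξ₀).symm w, Subtype.prop _, by rw [← L_apply hξ₀, LinearEquiv.apply_symm_apply]⟩
  have hι : W₁.ι = W₂.ι := by
    refine LinearMap.ext fun w => ?_
    obtain ⟨η, hη, rfl⟩ := hL w
    rw [weyl_iota hξ₀ W₁ hη, weyl_iota hξ₀ W₂ hη, hA hη]
  have hB {η₁ η₂ : P.X} (h₁ : η₁ ∈ P.V) (h₂ : η₂ ∈ P.V) :
      W₁.conn.cov η₁ η₂ = W₂.conn.cov η₁ η₂ :=
    levi_scale_injective hξ₀ (W₁.parV _ _ h₂) (W₂.parV _ _ h₂) <| by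
      rw [weyl_V hξ₀ W₁ h₁ h₂, weyl_V hξ₀ W₂ h₁ h₂, hι]
  have hG {η₁ : P.X} (h₁ : η₁ ∈ P.V) (w : P.Q) :
      W₁.conn.cov (W₁.ι w) η₁ = W₂.conn.cov (W₁.ι w) η₁ := by
    obtain ⟨η₂, h₂, rfl⟩ := hL w
    have n₁ := W₁.norm η₁ h₁ η₂ h₂
    have n₂ := W₂.norm η₁ h₁ η₂ h₂
    -- `τ(ξ₀, ζ η₁)` involves only `∇_{ξ₀}` and `ι`, so both normalizations have the same left side
    have ht : W₁.conn.torsion ξ₀ (W₁.ι (P.levi ξ₀ η₁)) =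
        W₂.conn.torsion ξ₀ (W₂.ι (P.levi ξ₀ η₁)) := by
      rw [Conn.torsion, Conn.torsion, weyl_cov_iota hξ₀ W₁ _ h₁, weyl_cov_iota hξ₀ W₂ _ h₁,
        W₁.parScale, W₂.parScale, hA h₁, hι]
    rw [ht, n₂, two_smul, two_smul] at n₁
    have n := eq_of_add_self_eq (P := P) n₁
    rw [Conn.torsion, Conn.torsion, weyl_cov_iota hξ₀ W₁ _ h₂, weyl_cov_iota hξ₀ W₂ _ h₂,
      hB h₁ h₂, ← hι] at n
    simp only [levi, lie_sub_right, map_sub] at n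
    exact levi_scale_injective hξ₀ (W₁.parV _ _ h₁) (W₂.parV _ _ h₁)
      (sub_right_injective (sub_left_injective n)).symm
  -- every vector field is a sum of sections of `E`, `V` and `ι(Q)`
  have hdec (φ : P.X) : ∃ (f : P.C) (η : P.X) (w : P.Q), η ∈ P.V ∧ φ = f • ξ₀ + η + W₁.ι w := by
    have h : φ - W₁.ι (P.q φ) ∈ P.E ⊔ P.V :=
      q_eq_zero.1 (by rw [map_sub, W₁.q_ι, sub_self])
    obtain ⟨ξ, hξ, η, hη, h⟩ := Submodule.mem_sup.1 h
    obtain ⟨f, rfl⟩ := hξ₀.span ξ hξ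
    exact ⟨f, η, P.q φ, hη, by rw [h, sub_add_cancel]⟩
  have hV (ψ : P.X) {η : P.X} (hη : η ∈ P.V) : W₁.conn.cov ψ η = W₂.conn.cov ψ η := by
    obtain ⟨f, η', w, hη', rfl⟩ := hdec ψ
    simp only [W₁.conn.add_left, W₂.conn.add_left, W₁.conn.smul_left, W₂.conn.smul_left]
    rw [hA hη, hB hη' hη, hG hη]
  refine ⟨?_, hι⟩
  funext ψ φ
  obtain ⟨f, η, w, hη, rfl⟩ := hdec φ
  obtain ⟨η', hη', rfl⟩ := hL w
  rw [W₁.conn.add_right, W₂.conn.add_right, W₁.conn.add_right, W₂.conn.add_right,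
    W₁.conn.leibniz, W₂.conn.leibniz, W₁.parScale, W₂.parScale, hV ψ hη,
    weyl_cov_iota hξ₀ W₁ ψ hη', hι, weyl_cov_iota hξ₀ W₂ ψ hη', hV ψ hη']

end Uniqueness

end PathGeometry

/-- Theorem 2.2 of the paper.  Let `(M,E,V)` be a path geometry and
`ξ₀` a nowhere vanishing local section of `E` (defined on an open subset `U`, which we
model by the path geometry restricted to `U`).  Then there are a unique linear
connection `∇` on `TU` and a unique decomposition `TU = E ⊕ V ⊕ ι(Q)` satisfying the
conditions (i), (ii), (iii) of the theorem (these are exactly the defining fields of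
`WeylStructure`): existence, and uniqueness of the pair `(∇, ι)`. -/
theorem weylStructure_existsUnique (P : PathGeometry) (ξ₀ : P.X) (hξ₀ : P.IsScale ξ₀) :
    Nonempty (WeylStructure P ξ₀) ∧
      ∀ W₁ W₂ : WeylStructure P ξ₀, W₁.conn.cov = W₂.conn.cov ∧ W₁.ι = W₂.ι := by
  exact ⟨⟨PathGeometry.weylStructure hξ₀⟩, PathGeometry.weyl_unique hξ₀⟩
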